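/- The matrix π₃ satisfies the orthogonality relations defining A_q(B₃): for all 1 ≤ i,m ≤ 7 one has Σ_{j,k,l=1}^{7} C_{jk} C_{lm} π₃(t_{ij}) ∘ π₃(t_{lk}) = δ_{i,m}·id_F and Σ_{j,k,l=1}^{7} C_{ij} C_{kl} π₃(t_{kj}) ∘ π₃(t_{lm}) = δ_{i,m}·id_F as operators on F. -/

import Mathlib

open TensorProduct

noncomputable section

abbrev Fq : Type := RatFunc ℚ

def q : Fq := RatFunc.X

abbrev F : Type := ℕ →₀ Fq

def ket (m : ℕ) : F := Finsupp.single m 1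

/-- Linear operator on the Fock space from its action on the basis. -/
def opOf (v : ℕ → F) : F →ₗ[Fq] F := Finsupp.lift F Fq ℕ v

/-- q²-oscillator K -/
def K2 : F →ₗ[Fq] F := opOf fun m => q ^ (2 * m) • ket m
/-- q²-oscillator A⁺ -/
def Ap : F →ₗ[Fq] F := opOf fun m => ket (m + 1)
/-- q²-oscillator A⁻ -/
def Am : F →ₗ[Fq] F := opOf fun m => (1 - q ^ (4 * m)) • ket (m - 1)
/-- q-oscillator k -/
def kk : F →ₗ[Fq] F := opOf fun m => q ^ m • ket m
/-- q-oscillator a⁺ -/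
def ap : F →ₗ[Fq] F := opOf fun m => ket (m + 1)
/-- q-oscillator a⁻ -/
def am : F →ₗ[Fq] F := opOf fun m => (1 - q ^ (2 * m)) • ket (m - 1)

def pi1 (α β μ ν κ σ : Fq) : Matrix (Fin 7) (Fin 7) (F →ₗ[Fq] F) :=
  !![μ • Am, α • K2, 0, 0, 0, 0, 0;
     β • K2, ν • Ap, 0, 0, 0, 0, 0;
     0, 0, κ • LinearMap.id, 0, 0, 0, 0;
     0, 0, 0, σ • LinearMap.id, 0, 0, 0;
     0, 0, 0, 0, κ⁻¹ • LinearMap.id, 0, 0;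
     0, 0, 0, 0, 0, ν⁻¹ • Am, (q ^ 2 * β⁻¹) • K2;
     0, 0, 0, 0, 0, (q ^ 2 * α⁻¹) • K2, μ⁻¹ • Ap]

def pi2 (α β μ ν κ σ : Fq) : Matrix (Fin 7) (Fin 7) (F →ₗ[Fq] F) :=
  !![κ • LinearMap.id, 0, 0, 0, 0, 0, 0;
     0, μ • Am, α • K2, 0, 0, 0, 0;
     0, β • K2, ν • Ap, 0, 0, 0, 0;
     0, 0, 0, σ • LinearMap.id, 0, 0, 0;
     0, 0, 0, 0, ν⁻¹ • Am, (q ^ 2 * β⁻¹) • K2, 0;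
     0, 0, 0, 0, (q ^ 2 * α⁻¹) • K2, μ⁻¹ • Ap, 0;
     0, 0, 0, 0, 0, 0, κ⁻¹ • LinearMap.id]

def pi3 (α μ κa κb : Fq) : Matrix (Fin 7) (Fin 7) (F →ₗ[Fq] F) :=
  !![κa • LinearMap.id, 0, 0, 0, 0, 0, 0;
     0, κb • LinearMap.id, 0, 0, 0, 0, 0;
     0, 0, μ • (am ∘ₗ am), α • (kk ∘ₗ am), (-((1 + q ^ 2) * μ)⁻¹ * α ^ 2) • (kk ∘ₗ kk), 0, 0;
     0, 0, (-(1 + q ^ 2) * α⁻¹ * μ) • (am ∘ₗ kk), am ∘ₗ ap - kk ∘ₗ kk, (-(q * μ)⁻¹ * α) • (kk ∘ₗ ap), 0, 0;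
     0, 0, (-(1 + q ^ 2) * q ^ 2 * α⁻¹ ^ 2 * μ) • (kk ∘ₗ kk), ((1 + q ^ 2) * α⁻¹) • (kk ∘ₗ ap), μ⁻¹ • (ap ∘ₗ ap), 0, 0;
     0, 0, 0, 0, 0, κb⁻¹ • LinearMap.id, 0;
     0, 0, 0, 0, 0, 0, κa⁻¹ • LinearMap.id]

def rhoB : Fin 7 → ℤ := ![5, 3, 1, 0, -1, -3, -5]

def CB : Matrix (Fin 7) (Fin 7) Fq := fun i j => if (i : ℕ) + (j : ℕ) = 6 then q ^ rhoB j else 0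

/-!
The two families of relations say exactly that `C Tᵀ C` is a two-sided inverse of the matrix `T`
over the algebra of operators. This property is inherited by block diagonal matrices
`u ⊕ M ⊕ u⁻¹`, so it suffices to treat the central `3 × 3` block of `π₃`. Up to rescaling, that
block is the spin-one representation of the quantum `SL₂` matrix with rows `(a⁻, k)` and
`(-q k, a⁺)`, whose quantum determinant `a⁻ a⁺ + q² k²` is `1` in the `q`-oscillator algebra. Moving
`k` to the left and eliminating `a⁻ a⁺` and `a⁺ a⁻` turns each entry of the two products into a
combination of normally ordered words, and it remains to compare coefficients.
-/

section MetricAdjoint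

open Matrix

variable {n K A : Type*} [Fintype n] [CommSemiring K] [Semiring A] [Algebra K A]

/-- The quantum counterpart `C Tᵀ C` of the adjoint of `T` for the bilinear form with Gram matrix
`C`. The transpose does not reverse products of entries, which need not commute. -/
def metricAdjoint (C : Matrix n n K) (T : Matrix n n A) : Matrix n n A :=
  C.map (algebraMap K A) * Tᵀ * C.map (algebraMap K A)

/-- The defining relations of the quantum orthogonal group attached to the metric `C`. -/
structure IsQuantumOrthogonal [DecidableEq n] (C : Matrix n n K) (T : Matrix n n A) : Prop where
  mul_metricAdjoint : T * metricAdjoint C T = 1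
  metricAdjoint_mul : metricAdjoint C T * T = 1

theorem metricAdjoint_apply (C : Matrix n n K) (T : Matrix n n A) (i m : n) :
    metricAdjoint C T i m = ∑ k, ∑ l, (C i k * C l m) • T l k := by
  simp only [metricAdjoint, mul_apply, map_apply, transpose_apply, Finset.sum_mul]
  rw [Finset.sum_comm]
  refine Finset.sum_congr rfl fun k _ ↦ Finset.sum_congr rfl fun l _ ↦ ?_
  rw [Algebra.smul_def, map_mul, mul_assoc, mul_assoc, Algebra.commutes (C l m)]

theorem mul_metricAdjoint_apply (C : Matrix n n K) (T : Matrix n n A) (i m : n) :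
    (T * metricAdjoint C T) i m = ∑ j, ∑ k, ∑ l, (C j k * C l m) • (T i j * T l k) := by
  simp only [mul_apply, metricAdjoint_apply, Finset.mul_sum, mul_smul_comm]

theorem metricAdjoint_mul_apply (C : Matrix n n K) (T : Matrix n n A) (i m : n) :
    (metricAdjoint C T * T) i m = ∑ j, ∑ k, ∑ l, (C i j * C k l) • (T k j * T l m) := by
  simp only [mul_apply, metricAdjoint_apply, Finset.sum_mul, smul_mul_assoc]
  rw [Finset.sum_comm]
  exact Finset.sum_congr rfl fun j _ ↦ Finset.sum_comm

/-- The antidiagonal metric whose entry in column `j` is `d j`. -/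
def antidiagonalMetric {n : ℕ} (d : Fin n → K) : Matrix (Fin n) (Fin n) K :=
  of fun i j ↦ if i.rev = j then d j else 0

theorem metricAdjoint_antidiagonalMetric_apply {n : ℕ} (d : Fin n → K)
    (T : Matrix (Fin n) (Fin n) A) (i j : Fin n) :
    metricAdjoint (antidiagonalMetric d) T i j = (d i.rev * d j) • T j.rev i.rev := by
  simp [metricAdjoint_apply, antidiagonalMetric, Fin.rev_eq_iff (j := j), ite_smul]

end MetricAdjoint

section HyperbolicExtension

open Matrix

variable {n : ℕ} {K A : Type*} [Field K] [Semiring A] [Algebra K A]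

/-- The block diagonal matrix with blocks `u`, `M`, `u⁻¹`: the embedding of `GL₁ × O(n)` into
`O(n + 2)` attached to the addition of a hyperbolic plane. -/
def hyperbolicExtension (u : K) (M : Matrix (Fin n) (Fin n) A) :
    Matrix (Fin (n + 2)) (Fin (n + 2)) A :=
  of (Fin.cons (Fin.cons (u • 1) 0)
    (Fin.snoc (fun i ↦ Fin.cons 0 (Fin.snoc (M i) 0)) (Fin.cons 0 (Fin.snoc 0 (u⁻¹ • 1)))))

theorem hyperbolicExtension_one_one :
    hyperbolicExtension (1 : K) (1 : Matrix (Fin n) (Fin n) A) = 1 := by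
  ext i j
  refine Fin.cases ?_ (Fin.lastCases ?_ fun i ↦ ?_) i <;>
    refine Fin.cases ?_ (Fin.lastCases ?_ fun j ↦ ?_) j <;>
    simp [hyperbolicExtension, one_apply, -Fin.succ_last, (Fin.succ_ne_zero _).symm,
      (Fin.castSucc_ne_last _).symm]

theorem hyperbolicExtension_mul (u v : K) (M N : Matrix (Fin n) (Fin n) A) :
    hyperbolicExtension u M * hyperbolicExtension v N = hyperbolicExtension (u * v) (M * N) := by
  ext i j
  refine Fin.cases ?_ (Fin.lastCases ?_ fun i ↦ ?_) i <;>
    refine Fin.cases ?_ (Fin.lastCases ?_ fun j ↦ ?_) j <;>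
    simp [hyperbolicExtension, mul_apply, Fin.sum_univ_succ (n := n + 1), Fin.sum_univ_castSucc,
      -Fin.succ_last, smul_smul, mul_comm]

theorem metricAdjoint_hyperbolicExtension {c : K} (hc : c ≠ 0) (d : Fin n → K) (u : K)
    (M : Matrix (Fin n) (Fin n) A) :
    metricAdjoint (antidiagonalMetric (Fin.cons c (Fin.snoc d c⁻¹) : Fin (n + 2) → K))
        (hyperbolicExtension u M) =
      hyperbolicExtension u⁻¹ (metricAdjoint (antidiagonalMetric d) M) := by
  ext i j
  refine Fin.cases ?_ (Fin.lastCases ?_ fun i ↦ ?_) i <;>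
    refine Fin.cases ?_ (Fin.lastCases ?_ fun j ↦ ?_) j <;>
    simp [hyperbolicExtension, metricAdjoint_antidiagonalMetric_apply, Fin.rev_zero,
      Fin.rev_succ, Fin.rev_castSucc, -Fin.succ_last, ← Fin.succ_last n, hc]

theorem IsQuantumOrthogonal.hyperbolicExtension {c u : K} (hc : c ≠ 0) (hu : u ≠ 0)
    {d : Fin n → K} {M : Matrix (Fin n) (Fin n) A}
    (hM : IsQuantumOrthogonal (antidiagonalMetric d) M) :
    IsQuantumOrthogonal (antidiagonalMetric (Fin.cons c (Fin.snoc d c⁻¹) : Fin (n + 2) → K))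
      (hyperbolicExtension u M) where
  mul_metricAdjoint := by
    rw [metricAdjoint_hyperbolicExtension hc, hyperbolicExtension_mul, hM.mul_metricAdjoint,
      mul_inv_cancel₀ hu, hyperbolicExtension_one_one]
  metricAdjoint_mul := by
    rw [metricAdjoint_hyperbolicExtension hc, hyperbolicExtension_mul, hM.metricAdjoint_mul,
      inv_mul_cancel₀ hu, hyperbolicExtension_one_one]

end HyperbolicExtension

section QOscillator

open Matrix

variable {K A : Type*} [Field K] [Ring A] [Algebra K A]

/-- The relations of the `p`-oscillator algebra with generators `k`, `c` (creation, the paper's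
`a⁺`) and `a` (annihilation, `a⁻`). -/
structure IsQOscillator (p : K) (k c a : A) : Prop where
  k_mul_c : k * c = p • (c * k)
  a_mul_k : a * k = p • (k * a)
  a_mul_c : a * c = 1 - p ^ 2 • (k * k)
  c_mul_a : c * a = 1 - k * k

/-- The central block of `π₃`, for an arbitrary triple `k`, `c`, `a`. -/
def spinOne (p α μ : K) (k c a : A) : Matrix (Fin 3) (Fin 3) A :=
  !![μ • (a * a), α • (k * a), (-((1 + p ^ 2) * μ)⁻¹ * α ^ 2) • (k * k);
     (-(1 + p ^ 2) * α⁻¹ * μ) • (a * k), a * c - k * k, (-(p * μ)⁻¹ * α) • (k * c);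
     (-(1 + p ^ 2) * p ^ 2 * α⁻¹ ^ 2 * μ) • (k * k), ((1 + p ^ 2) * α⁻¹) • (k * c),
       μ⁻¹ • (c * c)]

theorem metricAdjoint_spinOne {p : K} (hp : p ≠ 0) (α μ : K) (k c a : A) :
    metricAdjoint (antidiagonalMetric ![p, 1, p⁻¹]) (spinOne p α μ k c a) =
      !![μ⁻¹ • (c * c), (-(p ^ 2 * μ)⁻¹ * α) • (k * c),
          (-(p ^ 2 * (1 + p ^ 2) * μ)⁻¹ * α ^ 2) • (k * k);
        (p * (1 + p ^ 2) * α⁻¹) • (k * c), a * c - k * k, (p⁻¹ * α) • (k * a);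
        (-(1 + p ^ 2) * p ^ 4 * α⁻¹ ^ 2 * μ) • (k * k), (-p * (1 + p ^ 2) * α⁻¹ * μ) • (a * k),
          μ • (a * a)] := by
  ext i j
  rw [metricAdjoint_antidiagonalMetric_apply]
  fin_cases i <;> fin_cases j <;>
    simp only [spinOne, Fin.zero_eta, Fin.mk_one, Fin.reduceFinMk, Fin.rev_zero, Fin.reduceLast,
      Fin.reduceRev, of_apply, cons_val] <;>
    match_scalars <;> field_simp

namespace IsQOscillator

variable {p α μ : K} {k c a : A}

theorem c_mul_k (h : IsQOscillator p k c a) (hp : p ≠ 0) : c * k = p⁻¹ • (k * c) := by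
  rw [h.k_mul_c, inv_smul_smul₀ hp]

theorem c_mul_k_mul (h : IsQOscillator p k c a) (hp : p ≠ 0) (x : A) :
    c * (k * x) = p⁻¹ • (k * (c * x)) := by
  rw [← mul_assoc, h.c_mul_k hp, smul_mul_assoc, mul_assoc]

theorem a_mul_k_mul (h : IsQOscillator p k c a) (x : A) : a * (k * x) = p • (k * (a * x)) := by
  rw [← mul_assoc, h.a_mul_k, smul_mul_assoc, mul_assoc]

theorem a_mul_c_mul (h : IsQOscillator p k c a) (x : A) :
    a * (c * x) = x - p ^ 2 • (k * (k * x)) := by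
  rw [← mul_assoc, h.a_mul_c, sub_mul, one_mul, smul_mul_assoc, mul_assoc]

theorem c_mul_a_mul (h : IsQOscillator p k c a) (x : A) : c * (a * x) = x - k * (k * x) := by
  rw [← mul_assoc, h.c_mul_a, sub_mul, one_mul, mul_assoc]

theorem isQuantumOrthogonal_spinOne (h : IsQOscillator p k c a) (hp : p ≠ 0) (hr : 1 + p ^ 2 ≠ 0)
    (hα : α ≠ 0) (hμ : μ ≠ 0) :
    IsQuantumOrthogonal (antidiagonalMetric ![p, 1, p⁻¹]) (spinOne p α μ k c a) := by
  constructor <;>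
    rw [metricAdjoint_spinOne hp, spinOne, mul_fin_three, one_fin_three] <;>
    ext i j <;> fin_cases i <;> fin_cases j <;>
    simp only [Fin.zero_eta, Fin.mk_one, Fin.reduceFinMk, of_apply, cons_val, mul_sub, sub_mul,
      smul_sub, mul_smul_comm, smul_mul_assoc, mul_assoc, mul_one, one_mul, h.c_mul_k hp,
      h.c_mul_k_mul hp, h.a_mul_k, h.a_mul_k_mul, h.a_mul_c, h.a_mul_c_mul, h.c_mul_a,
      h.c_mul_a_mul] <;>
    match_scalars <;> field_simp <;> ring

end IsQOscillator

end QOscillator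

section FockSpace

theorem opOf_ket (v : ℕ → F) (m : ℕ) : opOf v (ket m) = v m := by
  simp [opOf, ket]

theorem kk_ket (m : ℕ) : kk (ket m) = q ^ m • ket m := opOf_ket _ m

theorem ap_ket (m : ℕ) : ap (ket m) = ket (m + 1) := opOf_ket _ m

theorem am_ket (m : ℕ) : am (ket m) = (1 - q ^ (2 * m)) • ket (m - 1) := opOf_ket _ m

theorem linearMap_ext_ket {f g : F →ₗ[Fq] F} (h : ∀ m, f (ket m) = g (ket m)) : f = g :=
  Finsupp.lhom_ext' fun m ↦ LinearMap.ext_ring (h m)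

theorem isQOscillator_fock : IsQOscillator q (A := Module.End Fq F) kk ap am where
  k_mul_c := linearMap_ext_ket fun m ↦ by
    simp [kk_ket, ap_ket, smul_smul, pow_succ']
  a_mul_k := linearMap_ext_ket fun m ↦ by
    cases m with
    | zero => simp [kk_ket, am_ket]
    | succ m => simp [kk_ket, am_ket, smul_smul, pow_succ', mul_comm, mul_assoc]
  a_mul_c := linearMap_ext_ket fun m ↦ by
    simp [kk_ket, ap_ket, am_ket, smul_smul, sub_smul, ← pow_add, mul_add, two_mul, add_comm]
  c_mul_a := linearMap_ext_ket fun m ↦ by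
    cases m <;> simp [kk_ket, ap_ket, am_ket, smul_smul, sub_smul, ← pow_add, two_mul]

theorem q_ne_zero : q ≠ 0 := RatFunc.X_ne_zero

theorem one_add_q_sq_ne_zero : 1 + q ^ 2 ≠ 0 := by
  have h : (1 + q ^ 2 : Fq) = algebraMap (Polynomial ℚ) Fq (1 + Polynomial.X ^ 2) := by
    simp [q, RatFunc.algebraMap_X]
  rw [h, map_ne_zero_iff _ (RatFunc.algebraMap_injective ℚ)]
  intro h0
  simpa using congrArg (Polynomial.eval 0) h0

theorem CB_eq_antidiagonalMetric :
    CB = antidiagonalMetric (Fin.cons (q ^ 5)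
      (Fin.snoc (Fin.cons (q ^ 3) (Fin.snoc ![q, 1, q⁻¹] (q ^ 3)⁻¹)) (q ^ 5)⁻¹)) := by
  ext i j
  fin_cases i <;> fin_cases j <;> simp [CB, rhoB, antidiagonalMetric, Fin.ext_iff]

theorem pi3_eq_hyperbolicExtension (α μ κa κb : Fq) :
    pi3 α μ κa κb = hyperbolicExtension (A := Module.End Fq F) κa
      (hyperbolicExtension κb (spinOne q α μ kk ap am)) := by
  ext i j : 2
  fin_cases i <;> fin_cases j <;> rfl

theorem isQuantumOrthogonal_pi3 {α μ κa κb : Fq} (hα : α ≠ 0) (hμ : μ ≠ 0) (hκa : κa ≠ 0)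
    (hκb : κb ≠ 0) : IsQuantumOrthogonal (A := Module.End Fq F) CB (pi3 α μ κa κb) := by
  have h : IsQuantumOrthogonal (antidiagonalMetric ![q, 1, q⁻¹]) (spinOne q α μ kk ap am) :=
    isQOscillator_fock.isQuantumOrthogonal_spinOne q_ne_zero one_add_q_sq_ne_zero hα hμ
  rw [CB_eq_antidiagonalMetric, pi3_eq_hyperbolicExtension]
  exact (h.hyperbolicExtension (pow_ne_zero 3 q_ne_zero) hκb).hyperbolicExtension
    (pow_ne_zero 5 q_ne_zero) hκa

end FockSpace

/-- the matrix π₃ satisfies the orthogonality relations defining A_q(B₃). -/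
theorem pi3_orthogonality
    (α μ κa κb : Fq) (hα : α ≠ 0) (hμ : μ ≠ 0) (hκa : κa ≠ 0) (hκb : κb ≠ 0) :
    ∀ i m : Fin 7,
      ((∑ j : Fin 7, ∑ k : Fin 7, ∑ l : Fin 7,
        (CB j k * CB l m) • (pi3 α μ κa κb i j ∘ₗ pi3 α μ κa κb l k))
        = if i = m then LinearMap.id else 0) ∧
      ((∑ j : Fin 7, ∑ k : Fin 7, ∑ l : Fin 7,
        (CB i j * CB k l) • (pi3 α μ κa κb k j ∘ₗ pi3 α μ κa κb l m))
        = if i = m then LinearMap.id else 0) := by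
  intro i m
  have h := isQuantumOrthogonal_pi3 hα hμ hκa hκb
  constructor
  · calc
      _ = (pi3 α μ κa κb * metricAdjoint CB (pi3 α μ κa κb)) i m :=
        (mul_metricAdjoint_apply CB (pi3 α μ κa κb) i m).symm
      _ = _ := by rw [h.mul_metricAdjoint, Matrix.one_apply, Module.End.one_eq_id]
  · calc
      _ = (metricAdjoint CB (pi3 α μ κa κb) * pi3 α μ κa κb) i m :=
        (metricAdjoint_mul_apply CB (pi3 α μ κa κb) i m).symm
      _ = _ := by rw [h.metricAdjoint_mul, Matrix.one_apply, Module.End.one_eq_id]
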